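/- Let Ψ be a forest-algebra formula and let v be a node of Ψ such that the first 8 nodes on lp(v) each have absolute balance at least 2. Then there is a node u on lp(v) such that either a height reducing rotation is applicable at u, or a height reducing double rotation is applicable at u, or u is a ⊙-node with balance(u) ≤ −2 at which a height preserving rotation is applicable. -/

import Mathlib

/-! ### Forest-algebra formulas

A forest-algebra formula is a binary parse tree whose inner nodes are
labeled by one of the five forest-algebra operations and whose leaves are
labeled by a symbol `a` (a single-node forest, constructor `fa`) or `a_□`
(the context with a single `a`-labeled root whose only child is the hole,
constructor `ca`).  The two leaf-label types `α` and `β` are kept separate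
so that leaves may carry extra decorations. -/

/-- The five forest-algebra operations: `⊕_HH`, `⊕_HV`, `⊕_VH`, `⊙_VV`,
`⊙_VH`. -/
inductive FAOp : Type
  | hh | hv | vh | vv | vhd
deriving DecidableEq

inductive Formula (α β : Type) : Type
  | fa : α → Formula α β
  | ca : β → Formula α β
  | node : FAOp → Formula α β → Formula α β → Formula α β

namespace Formula

variable {α β : Type}

/-- The height of (the parse tree of) a formula. -/
def height : Formula α β → ℕ
  | fa _ => 1
  | ca _ => 1
  | node _ l r => 1 + max l.height r.height

/-- The number of leaves of a formula. -/
def numLeaves : Formula α β → ℕ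
  | fa _ => 1
  | ca _ => 1
  | node _ l r => l.numLeaves + r.numLeaves

/-- `balance(v)`: height of the right subformula minus height of the left
subformula (0 for leaves). -/
def bal : Formula α β → ℤ
  | node _ l r => (r.height : ℤ) - (l.height : ℤ)
  | _ => 0

/-- The absolute balance. -/
def abal (t : Formula α β) : ℤ := |t.bal|

/-- The sort of a (sub)formula: `true` if it denotes a forest,
`false` if it denotes a context. -/
def sort : Formula α β → Bool
  | fa _ => true
  | ca _ => false
  | node .hh _ _ => true
  | node .vhd _ _ => true
  | node _ _ _ => false

/-- Well-typedness of a formula: the operands of each operation have the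
required sorts. -/
def WT : Formula α β → Prop
  | fa _ => True
  | ca _ => True
  | node .hh l r => l.sort = true ∧ r.sort = true ∧ WT l ∧ WT r
  | node .hv l r => l.sort = true ∧ r.sort = false ∧ WT l ∧ WT r
  | node .vh l r => l.sort = false ∧ r.sort = true ∧ WT l ∧ WT r
  | node .vv l r => l.sort = false ∧ r.sort = false ∧ WT l ∧ WT r
  | node .vhd l r => l.sort = false ∧ r.sort = true ∧ WT l ∧ WT r

/-- `IsSubformula t s`: `t` is the subformula of `s` rooted at some node. -/
inductive IsSubformula : Formula α β → Formula α β → Prop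
  | refl (t : Formula α β) : IsSubformula t t
  | left {t l r} {op : FAOp} : IsSubformula t l → IsSubformula t (node op l r)
  | right {t l r} {op : FAOp} : IsSubformula t r → IsSubformula t (node op l r)

/-- The long path `lp(v)` of (the subformula rooted at) `v`, as the list of
subformulas rooted at its nodes: it stops at the first node of balance 0 and
otherwise continues into the strictly deeper subformula. -/
def lpList : Formula α β → List (Formula α β)
  | node op l r =>
    if l.height = r.height then [node op l r]
    else if l.height < r.height then node op l r :: lpList r
    else node op l r :: lpList l
  | t => [t]

end Formula

namespace Formula

variable {α β : Type}

/-- The eight rotation equations of associativity shape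
`(x1 ∘_a x2) ∘_b x3 = x1 ∘_c (x2 ∘_d x3)` of Table 2, given by the tuples
`(a, b, c, d)` of operation labels. -/
def assocCombos : List (FAOp × FAOp × FAOp × FAOp) :=
  [(.hh, .hh, .hh, .hh),
   (.vh, .vh, .vh, .hh),
   (.hv, .vh, .hv, .vh),
   (.hh, .hv, .hv, .hv),
   (.vv, .vv, .vv, .vv),
   (.vv, .vhd, .vhd, .vhd),
   (.hv, .vhd, .hh, .vhd),
   (.hv, .vv, .hv, .vv)]

/-- The two rotation equations of swap shape
`(x1 ∘_a x2) ∘_b x3 = (x1 ∘_c x3) ∘_d x2` of Table 2 (rotations 3a/3b). -/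
def swapCombos : List (FAOp × FAOp × FAOp × FAOp) :=
  [(.vh, .vhd, .vhd, .hh),
   (.vh, .vv, .vv, .vh)]

/-- A height reducing rotation is applicable at (the subformula) `t`: the
labels of `t` and its deeper child match one of the ten rotation equations
and the subformula `Ψ_↑` that moves up is strictly deeper than the other two
(`height(Ψ_↑) > max(height(Ψ_↓), height(Ψ_→))`). -/
def HRApplicable (t : Formula α β) : Prop :=
  -- a-direction of an associativity rotation: up = x1, down = x3, stay = x2
  (∃ a b c d x1 x2 x3, (a, b, c, d) ∈ assocCombos ∧
    t = node b (node a x1 x2) x3 ∧ x1.height > max x3.height x2.height) ∨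
  -- b-direction of an associativity rotation: up = x3, down = x1, stay = x2
  (∃ a b c d x1 x2 x3, (a, b, c, d) ∈ assocCombos ∧
    t = node c x1 (node d x2 x3) ∧ x3.height > max x1.height x2.height) ∨
  -- rotation 3a: up = x2, down = x3, stay = x1
  (∃ a b c d x1 x2 x3, (a, b, c, d) ∈ swapCombos ∧
    t = node b (node a x1 x2) x3 ∧ x2.height > max x3.height x1.height) ∨
  -- rotation 3b: up = x3, down = x2, stay = x1
  (∃ a b c d x1 x2 x3, (a, b, c, d) ∈ swapCombos ∧
    t = node d (node c x1 x3) x2 ∧ x3.height > max x2.height x1.height)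

/-- A height preserving rotation is applicable at `t`: the labels match one
of the ten rotation equations and the subformula `Ψ_→` that stays at the same
level is strictly deeper than the other two
(`height(Ψ_→) > max(height(Ψ_↑), height(Ψ_↓))`). -/
def HPApplicable (t : Formula α β) : Prop :=
  (∃ a b c d x1 x2 x3, (a, b, c, d) ∈ assocCombos ∧
    t = node b (node a x1 x2) x3 ∧ x2.height > max x1.height x3.height) ∨
  (∃ a b c d x1 x2 x3, (a, b, c, d) ∈ assocCombos ∧
    t = node c x1 (node d x2 x3) ∧ x2.height > max x1.height x3.height) ∨
  (∃ a b c d x1 x2 x3, (a, b, c, d) ∈ swapCombos ∧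
    t = node b (node a x1 x2) x3 ∧ x1.height > max x2.height x3.height) ∨
  (∃ a b c d x1 x2 x3, (a, b, c, d) ∈ swapCombos ∧
    t = node d (node c x1 x3) x2 ∧ x1.height > max x2.height x3.height)

/-- A concatenation label. -/
def _root_.FAOp.isOplus : FAOp → Prop
  | .hh => True
  | .hv => True
  | .vh => True
  | _ => False

/-- A height reducing double rotation (rotation 4a or 4b) is applicable at
`t`: `t` and the next two nodes on its long path are ⊕-nodes with alternating
balance directions, a height preserving single rotation is applicable at the
middle node and, after it, a height reducing single rotation at `t`. -/
def HRDoubleApplicable (t : Formula α β) : Prop :=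
  -- rotation 4a
  (∃ (b1 b2 b3 : FAOp) (x1 x2 x3 x4 : Formula α β),
    b1.isOplus ∧ b2.isOplus ∧ b3.isOplus ∧
    t = node b1 (node b2 x1 (node b3 x2 x3)) x4 ∧
    x2.height > max x1.height x3.height ∧
    1 + max x1.height x2.height > max x4.height x3.height) ∨
  -- rotation 4b
  (∃ (b1 b2 b3 : FAOp) (x1 x2 x3 x4 : Formula α β),
    b1.isOplus ∧ b2.isOplus ∧ b3.isOplus ∧
    t = node b1 x1 (node b2 (node b3 x2 x3) x4) ∧
    x3.height > max x2.height x4.height ∧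
    1 + max x3.height x4.height > max x1.height x2.height)

/-- `t` is a ⊙-node (context application node). -/
def isConApp : Formula α β → Prop
  | node .vv _ _ => True
  | node .vhd _ _ => True
  | _ => False

end Formula

/-!
On a long path without applicable rotations, a ⊙-node leans right and differs in sort from its
predecessor, since otherwise the two labels match a rotation equation. As a forest is followed by a
context only at a ⊙-node leaning left, sorts change at most once, from context to forest. Two
consecutive ⊕-nodes lean in opposite directions, so three of them would admit a double rotation:
among any three consecutive nodes one is a ⊙-node. Hence for nodes `v₀, …, v₆`, the three nodes
after `v₀` make `v₃` a forest, while the three nodes after `v₃` make `v₃` a context.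
-/

namespace Formula

variable {α β : Type}

/-- One of the three admissible kinds of rotation is applicable at the root of `u`: height
reducing, height reducing double, or height preserving at a ⊙-node leaning left by at least 2. -/
def Rotatable (u : Formula α β) : Prop :=
  HRApplicable u ∨ HRDoubleApplicable u ∨ (isConApp u ∧ u.bal ≤ -2 ∧ HPApplicable u)

theorem not_isConApp_node {op : FAOp} {l r : Formula α β} :
    ¬ isConApp (node op l r) ↔ op.isOplus := by
  cases op <;> simp [isConApp, FAOp.isOplus]

theorem WT.of_node {op : FAOp} {l r : Formula α β} (h : (node op l r).WT) : l.WT ∧ r.WT := by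
  cases op <;> exact h.2.2

theorem WT.of_isSubformula {s t : Formula α β} (hs : s.WT) (h : IsSubformula t s) : t.WT := by
  induction h with
  | refl => exact hs
  | left _ ih => exact ih hs.of_node.1
  | right _ ih => exact ih hs.of_node.2

section RotationsByShape

variable {a b c d : FAOp} {x y z : Formula α β}

theorem hrApplicable_of_assoc_left (hm : (a, b, c, d) ∈ assocCombos)
    (hz : z.height + 2 ≤ (node a x y).height) (hyx : y.height < x.height) :
    HRApplicable (node b (node a x y) z) := by
  rw [height] at hz
  exact Or.inl ⟨a, b, c, d, x, y, z, hm, rfl, by omega⟩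

theorem hrApplicable_of_assoc_right (hm : (c, d, b, a) ∈ assocCombos)
    (hz : z.height + 2 ≤ (node a x y).height) (hxy : x.height < y.height) :
    HRApplicable (node b z (node a x y)) := by
  rw [height] at hz
  exact Or.inr (Or.inl ⟨c, d, b, a, z, x, y, hm, rfl, by omega⟩)

theorem hrApplicable_of_swap (hm : (a, b, c, d) ∈ swapCombos ∨ (c, d, a, b) ∈ swapCombos)
    (hz : z.height + 2 ≤ (node a x y).height) (hxy : x.height < y.height) :
    HRApplicable (node b (node a x y) z) := by
  rw [height] at hz
  rcases hm with hm | hm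
  · exact Or.inr (Or.inr (Or.inl ⟨a, b, c, d, x, y, z, hm, rfl, by omega⟩))
  · exact Or.inr (Or.inr (Or.inr ⟨c, d, a, b, x, z, y, hm, rfl, by omega⟩))

theorem hpApplicable_of_assoc (hm : (a, b, c, d) ∈ assocCombos)
    (hz : z.height + 2 ≤ (node a x y).height) (hxy : x.height < y.height) :
    HPApplicable (node b (node a x y) z) := by
  rw [height] at hz
  exact Or.inl ⟨a, b, c, d, x, y, z, hm, rfl, by omega⟩

theorem hpApplicable_of_swap (hm : (a, b, c, d) ∈ swapCombos)
    (hz : z.height + 2 ≤ (node a x y).height) (hyx : y.height < x.height) :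
    HPApplicable (node b (node a x y) z) := by
  rw [height] at hz
  exact Or.inr (Or.inr (Or.inl ⟨a, b, c, d, x, y, z, hm, rfl, by omega⟩))

end RotationsByShape

section MatchingLabels

variable {a b : FAOp} {x y z : Formula α β}

theorem exists_mem_combos_of_isConApp (h : (node b (node a x y) z).WT)
    (hb : isConApp (node b (node a x y) z)) :
    (∃ c d, (a, b, c, d) ∈ assocCombos) ∨ ∃ c d, (a, b, c, d) ∈ swapCombos := by
  cases a <;> cases b <;> simp_all [WT, sort, isConApp, assocCombos, swapCombos]

theorem exists_mem_assocCombos_of_isOplus_left (h : (node b (node a x y) z).WT)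
    (hb : b.isOplus) (ha : a.isOplus) : ∃ c d, (a, b, c, d) ∈ assocCombos := by
  cases a <;> cases b <;> simp_all [WT, sort, FAOp.isOplus, assocCombos]

theorem exists_mem_assocCombos_of_isOplus_right (h : (node b z (node a x y)).WT)
    (hb : b.isOplus) (ha : a.isOplus) : ∃ c d, (c, d, b, a) ∈ assocCombos := by
  cases a <;> cases b <;> simp_all [WT, sort, FAOp.isOplus, assocCombos]

theorem exists_mem_swapCombos_of_sort_eq (h : (node b (node a x y) z).WT)
    (hb : b.isOplus) (ha : isConApp (node a x y))
    (hs : (node b (node a x y) z).sort = (node a x y).sort) :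
    ∃ c d, (c, d, a, b) ∈ swapCombos := by
  cases a <;> cases b <;> simp_all [WT, sort, isConApp, FAOp.isOplus, swapCombos]

theorem exists_mem_assocCombos_of_sort_eq (h : (node b z (node a x y)).WT)
    (ha : isConApp (node a x y))
    (hs : (node b z (node a x y)).sort = (node a x y).sort) :
    ∃ c d, (c, d, b, a) ∈ assocCombos := by
  cases a <;> cases b <;> simp_all [WT, sort, isConApp, assocCombos]

end MatchingLabels

/-- `LongPathStep u w`: the node `w` is the successor of `u` on the long path, that is, the strictly
deeper child of `u`. -/
inductive LongPathStep : Formula α β → Formula α β → Prop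
  | left {op l r} : r.height < l.height → LongPathStep (node op l r) l
  | right {op l r} : l.height < r.height → LongPathStep (node op l r) r

namespace LongPathStep

variable {u w : Formula α β}

theorem bal_ne_zero (h : LongPathStep u w) : u.bal ≠ 0 := by
  cases h <;> rw [bal] <;> omega

theorem sort_eq_true (h : LongPathStep u w) (hu : u.WT) (hc : u.isConApp → 0 < u.bal)
    (hs : u.sort = true) : w.sort = true := by
  cases h with
  | @left op l r hlr =>
    have hop : op.isOplus := not_isConApp_node.1 fun h => by
      have := hc h
      rw [bal] at this
      omega
    cases op <;> simp_all [WT, sort, FAOp.isOplus]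
  | @right op l r hlr => cases op <;> simp_all [WT, sort]

end LongPathStep

theorem head?_lpList (t : Formula α β) : t.lpList.head? = some t := by
  cases t with
  | fa | ca => rfl
  | node => rw [lpList]; split_ifs <;> rfl

theorem isChain_lpList (t : Formula α β) : t.lpList.IsChain LongPathStep := by
  induction t with
  | fa | ca => exact List.isChain_singleton _
  | node op l r ihl ihr =>
    rw [lpList]
    split_ifs with heq hlt
    · exact List.isChain_singleton _
    · exact ihr.cons (by simpa [head?_lpList] using LongPathStep.right hlt)
    · exact ihl.cons (by simpa [head?_lpList] using LongPathStep.left (by omega))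

theorem WT.of_mem_lpList {t u : Formula α β} (ht : t.WT) (hu : u ∈ t.lpList) : u.WT := by
  induction t with
  | fa | ca => rwa [List.mem_singleton.1 hu]
  | node op l r ihl ihr =>
    rw [lpList] at hu
    split_ifs at hu <;> simp only [List.mem_cons, List.not_mem_nil, or_false] at hu
    · rwa [hu]
    · exact hu.elim (fun h => h ▸ ht) (ihr ht.of_node.2)
    · exact hu.elim (fun h => h ▸ ht) (ihl ht.of_node.1)

theorem exists_mem_lpList_bal_eq_zero : ∀ t : Formula α β, ∃ u ∈ t.lpList, u.bal = 0
  | fa _ | ca _ => ⟨_, List.mem_singleton_self _, rfl⟩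
  | node op l r => by
    obtain ⟨u, hu, hu0⟩ := exists_mem_lpList_bal_eq_zero l
    obtain ⟨w, hw, hw0⟩ := exists_mem_lpList_bal_eq_zero r
    rw [lpList]
    split_ifs with heq
    · exact ⟨_, List.mem_singleton_self _, by rw [bal]; omega⟩
    · exact ⟨w, List.mem_cons_of_mem _ hw, hw0⟩
    · exact ⟨u, List.mem_cons_of_mem _ hu, hu0⟩

theorem lt_length_lpList {t : Formula α β} {n : ℕ}
    (h : ∀ u ∈ t.lpList.take n, u.bal ≠ 0) : n < t.lpList.length := by
  by_contra! hn
  obtain ⟨u, hu, hu0⟩ := exists_mem_lpList_bal_eq_zero t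
  rw [List.take_of_length_le hn] at h
  exact h u hu hu0

/-- `ImbalancedStep u w`: the node `u` has absolute balance at least 2, and its successor `w` on the
long path has nonzero balance. Spelling out the children of `w` exposes the operands of a rotation
at `u`. -/
inductive ImbalancedStep : Formula α β → Formula α β → Prop
  | left {a b x y z} (hz : z.height + 2 ≤ (node a x y).height) (hxy : x.height ≠ y.height) :
      ImbalancedStep (node b (node a x y) z) (node a x y)
  | right {a b x y z} (hz : z.height + 2 ≤ (node a x y).height) (hxy : x.height ≠ y.height) :
      ImbalancedStep (node b z (node a x y)) (node a x y)

theorem LongPathStep.imbalancedStep {u w : Formula α β} (h : LongPathStep u w) (hu : 2 ≤ u.abal)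
    (hw : w.bal ≠ 0) : ImbalancedStep u w := by
  obtain ⟨a, x, y, rfl⟩ : ∃ a x y, w = node a x y := by
    cases w with
    | fa | ca => exact absurd rfl hw
    | node a x y => exact ⟨a, x, y, rfl⟩
  have hxy : x.height ≠ y.height := by rw [bal] at hw; omega
  rw [abal, le_abs] at hu
  cases h with
  | left h => rw [bal] at hu; exact .left (by omega) hxy
  | right h => rw [bal] at hu; exact .right (by omega) hxy

namespace ImbalancedStep

variable {u v w : Formula α β}

theorem longPathStep (h : ImbalancedStep u w) : LongPathStep u w := by
  cases h with
  | left hz => exact .left (by omega)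
  | right hz => exact .right (by omega)

theorem rotatable_of_isConApp_of_bal_neg (h : ImbalancedStep u w) (hu : u.WT) (hc : u.isConApp)
    (hneg : u.bal < 0) : Rotatable u := by
  cases h with
  | @left a b x y z hz hxy =>
    have hbal : (node b (node a x y) z).bal ≤ -2 := by rw [bal]; omega
    obtain ⟨c, d, hm⟩ | ⟨c, d, hm⟩ := exists_mem_combos_of_isConApp hu hc <;>
      rcases hxy.lt_or_gt with hlt | hgt
    · exact Or.inr (Or.inr ⟨hc, hbal, hpApplicable_of_assoc hm hz hlt⟩)
    · exact Or.inl (hrApplicable_of_assoc_left hm hz hgt)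
    · exact Or.inl (hrApplicable_of_swap (Or.inl hm) hz hlt)
    · exact Or.inr (Or.inr ⟨hc, hbal, hpApplicable_of_swap hm hz hgt⟩)
  | right hz => rw [bal] at hneg; omega

theorem hrApplicable_of_bal_mul_bal_pos (h : ImbalancedStep u w) (hu : u.WT)
    (hcu : ¬ u.isConApp) (hcw : ¬ w.isConApp) (hpos : 0 < u.bal * w.bal) : HRApplicable u := by
  rw [mul_pos_iff] at hpos
  cases h <;> rw [not_isConApp_node] at hcu hcw <;> rw [bal, bal] at hpos
  case left hz _ =>
    obtain ⟨c, d, hm⟩ := exists_mem_assocCombos_of_isOplus_left hu hcu hcw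
    exact hrApplicable_of_assoc_left hm hz (by omega)
  case right hz _ =>
    obtain ⟨c, d, hm⟩ := exists_mem_assocCombos_of_isOplus_right hu hcu hcw
    exact hrApplicable_of_assoc_right hm hz (by omega)

theorem rotatable_of_sort_eq (h : ImbalancedStep u w) (hu : u.WT) (hcw : w.isConApp)
    (hpos : 0 < w.bal) (hs : u.sort = w.sort) : Rotatable u := by
  by_cases hcu : u.isConApp ∧ u.bal < 0
  · exact h.rotatable_of_isConApp_of_bal_neg hu hcu.1 hcu.2
  refine Or.inl ?_
  cases h <;> rw [bal] at hpos
  case left hz _ =>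
    have hb := not_isConApp_node.1 fun hc => hcu ⟨hc, by rw [bal]; omega⟩
    obtain ⟨c, d, hm⟩ := exists_mem_swapCombos_of_sort_eq hu hb hcw hs
    exact hrApplicable_of_swap (Or.inr hm) hz (by omega)
  case right hz _ =>
    obtain ⟨c, d, hm⟩ := exists_mem_assocCombos_of_sort_eq hu hcw hs
    exact hrApplicable_of_assoc_right hm hz (by omega)

theorem hrDoubleApplicable_of_bal_mul_bal_neg (huv : ImbalancedStep u v)
    (hvw : ImbalancedStep v w) (hcu : ¬ u.isConApp) (hcv : ¬ v.isConApp) (hcw : ¬ w.isConApp)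
    (huv_neg : u.bal * v.bal < 0) (hvw_neg : v.bal * w.bal < 0) : HRDoubleApplicable u := by
  rw [mul_neg_iff] at huv_neg hvw_neg
  cases huv <;> cases hvw <;> rw [not_isConApp_node] at hcu hcv hcw <;>
    simp only [bal, height] at *
  case left.right hz _ _ _ _ hz' _ =>
    exact Or.inl ⟨_, _, _, _, _, _, _, hcu, hcv, hcw, rfl, by omega, by omega⟩
  case right.left hz _ _ _ _ hz' _ =>
    exact Or.inr ⟨_, _, _, _, _, _, _, hcu, hcv, hcw, rfl, by omega, by omega⟩
  all_goals omega

end ImbalancedStep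

/-- `StuckStep u w`: an imbalanced step of a long path in a well-typed formula that leaves a node
`u` at which no admissible rotation is applicable. -/
structure StuckStep (u w : Formula α β) : Prop where
  wt : u.WT
  step : ImbalancedStep u w
  not_rotatable : ¬ Rotatable u

namespace StuckStep

variable {u v w v₀ v₁ v₂ v₃ v₄ : Formula α β}

theorem bal_pos_of_isConApp (h : StuckStep u w) (hc : u.isConApp) : 0 < u.bal := by
  refine lt_of_le_of_ne (not_lt.1 fun hneg => ?_) h.step.longPathStep.bal_ne_zero.symm
  exact h.not_rotatable (h.step.rotatable_of_isConApp_of_bal_neg h.wt hc hneg)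

theorem sort_eq_true (h : StuckStep u w) (hs : u.sort = true) : w.sort = true :=
  h.step.longPathStep.sort_eq_true h.wt h.bal_pos_of_isConApp hs

theorem sort_of_isConApp (huv : StuckStep u v) (hvw : StuckStep v w) (hc : v.isConApp) :
    u.sort = false ∧ v.sort = true := by
  have hne : u.sort ≠ v.sort := fun hs => huv.not_rotatable
    (huv.step.rotatable_of_sort_eq huv.wt hc (hvw.bal_pos_of_isConApp hc) hs)
  have := huv.sort_eq_true
  cases hu : u.sort <;> simp_all

theorem bal_mul_bal_neg (huv : StuckStep u v) (hv : v.bal ≠ 0) (hcu : ¬ u.isConApp)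
    (hcv : ¬ v.isConApp) : u.bal * v.bal < 0 := by
  refine lt_of_le_of_ne (not_lt.1 fun hpos => huv.not_rotatable ?_)
    (mul_ne_zero huv.step.longPathStep.bal_ne_zero hv)
  exact Or.inl (huv.step.hrApplicable_of_bal_mul_bal_pos huv.wt hcu hcv hpos)

theorem isConApp_or_isConApp_or_isConApp (huv : StuckStep u v) (hvw : StuckStep v w)
    (hw : w.bal ≠ 0) : u.isConApp ∨ v.isConApp ∨ w.isConApp := by
  by_contra! ⟨hcu, hcv, hcw⟩
  exact huv.not_rotatable (Or.inr (Or.inl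
    (huv.step.hrDoubleApplicable_of_bal_mul_bal_neg hvw.step hcu hcv hcw
      (huv.bal_mul_bal_neg hvw.step.longPathStep.bal_ne_zero hcu hcv)
      (hvw.bal_mul_bal_neg hw hcv hcw))))

theorem sort_of_four_steps (h₀ : StuckStep v₀ v₁) (h₁ : StuckStep v₁ v₂) (h₂ : StuckStep v₂ v₃)
    (h₃ : StuckStep v₃ v₄) : v₀.sort = false ∧ v₃.sort = true := by
  have context_of_context {u w : Formula α β} (h : StuckStep u w) (hw : w.sort = false) :
      u.sort = false := by
    rw [← Bool.not_eq_true] at hw ⊢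
    exact mt h.sort_eq_true hw
  rcases h₁.isConApp_or_isConApp_or_isConApp h₂ h₃.step.longPathStep.bal_ne_zero with hc | hc | hc
  · obtain ⟨hs₀, hs₁⟩ := h₀.sort_of_isConApp h₁ hc
    exact ⟨hs₀, h₂.sort_eq_true (h₁.sort_eq_true hs₁)⟩
  · obtain ⟨hs₁, hs₂⟩ := h₁.sort_of_isConApp h₂ hc
    exact ⟨context_of_context h₀ hs₁, h₂.sort_eq_true hs₂⟩
  · obtain ⟨hs₂, hs₃⟩ := h₂.sort_of_isConApp h₃ hc
    exact ⟨context_of_context h₀ (context_of_context h₁ hs₂), hs₃⟩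

end StuckStep

end Formula

open Formula in
theorem imbalanced_long_path_rotation_possible_general {α β : Type} {t : Formula α β}
    (ht : t.WT) (hlen : 9 ≤ t.lpList.length) (hbal : ∀ u ∈ t.lpList.take 7, 2 ≤ u.abal) :
    ∃ u ∈ t.lpList, Rotatable u := by
  by_contra! hrot
  have step := List.isChain_iff_getElem.1 t.isChain_lpList
  have stuck (i : ℕ) (hi : i < 7) : StuckStep t.lpList[i] t.lpList[i + 1] :=
    { wt := ht.of_mem_lpList (List.getElem_mem _)
      step := (step i (by omega)).imbalancedStep
        (hbal _ (List.mem_take_iff_getElem.2 ⟨i, by omega, rfl⟩))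
        (step (i + 1) (by omega)).bal_ne_zero
      not_rotatable := hrot _ (List.getElem_mem _) }
  have forest := (StuckStep.sort_of_four_steps (stuck 0 (by omega)) (stuck 1 (by omega))
    (stuck 2 (by omega)) (stuck 3 (by omega))).2
  have context := (StuckStep.sort_of_four_steps (stuck 3 (by omega)) (stuck 4 (by omega))
    (stuck 5 (by omega)) (stuck 6 (by omega))).1
  exact Bool.false_ne_true (context.symm.trans forest)

/-- Let `Ψ` be a (well-typed) forest-algebra formula and `v`
a node of `Ψ` (with subformula `t`) such that the first 8 nodes on `lp(v)`
each have absolute balance at least 2.  Then there is a node `u` on `lp(v)`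
such that either a height reducing rotation is applicable at `u`, or a height
reducing double rotation is applicable at `u`, or `u` is a ⊙-node with
`balance(u) ≤ −2` at which a height preserving rotation is applicable. -/
theorem imbalanced_long_path_rotation_possible {σ : Type}
    (Ψ t : Formula σ σ)
    (hWT : Ψ.WT)
    (hsub : Formula.IsSubformula t Ψ)
    (hlen : 8 ≤ t.lpList.length)
    (hbal : ∀ u ∈ t.lpList.take 8, 2 ≤ u.abal) :
    ∃ u ∈ t.lpList,
      Formula.HRApplicable u ∨
      Formula.HRDoubleApplicable u ∨
      (Formula.isConApp u ∧ u.bal ≤ -2 ∧ Formula.HPApplicable u) := by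
  refine imbalanced_long_path_rotation_possible_general (hWT.of_isSubformula hsub)
    (Formula.lt_length_lpList fun u hu hu0 => ?_)
    fun u hu => hbal u (List.take_subset_take_left _ (by norm_num) hu)
  simpa [Formula.abal, hu0] using hbal u hu
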